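/- Let 0 < ε < 1/2, let r ≥ 1 and n ≥ 64r, and let T be an ε-noisy boolean decision tree on n variables of depth at most (n/2) · log₂(n/(64r)) / log₂(1/ε). Then there exists a randomized query algorithm A (a distribution over deterministic boolean decision trees whose leaves are labeled by leaves of T) such that for every input x ∈ {0,1}^n, the distribution of the leaf of T reached by A on x equals the leaf distribution of the ε-noisy computation of T on x, and with probability at least 1 - e^(-4) ≥ 7/8 the computation of A on x leaves at least r variables unread. -/

import Mathlib

/-!
A step of the `ε`-noisy computation at a node labeled `i` amounts to moving to the child indexed by
`x i` with probability `1 - 2ε`, and to a uniformly random child otherwise. The simulation reads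
`x i` in the first case only.

Conditioned on the path followed, the variables remain unread independently of each other: a step
that disagrees with `x i` reads nothing, and a step that agrees with `x i` leaves `i` unread with
probability `ε / (1 - ε) ≥ ε`. If `q k` is the resulting probability that `k` stays unread, the
product of all `q k` is at least `ε ^ d` on a path of length at most `d`, so by AM-GM the expected
number of unread variables is at least `n ε ^ (d / n)` whatever the path, and a Chernoff bound
(with moment generating function `𝔼 (1 - θ) ^ #unread`, at `θ = 1 / 2`) controls the lower tail.
To avoid conditioning, the induction on the tree bounds `𝔼 ∏ (1 - θ p k)`, over the unread `k`,
for every starting vector `p` of probabilities.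
-/

/-- A boolean decision tree on `n` variables with leaves labeled by `L`:
internal nodes are labeled by a variable index and have two children
(child `0` and child `1`). -/
inductive NoisyTree (n : ℕ) (L : Type) : Type where
  | leaf : L → NoisyTree n L
  | node : Fin n → NoisyTree n L → NoisyTree n L → NoisyTree n L

namespace NoisyTree

/-- Depth of a tree: maximum length of a root-to-leaf path. -/
def depth {n : ℕ} {L : Type} : NoisyTree n L → ℕ
  | .leaf _ => 0
  | .node _ t0 t1 => max (depth t0) (depth t1) + 1

/-- The leaf(-label) distribution of the `ε`-noisy computation of the tree on
input `x`: at a node labeled `i`, move to the child indexed by `x i ⊕ η` where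
`η` is a fresh independent Bernoulli(`ε`) bit.  `leafDist ε t x l` is the
probability that the noisy computation reaches a leaf labeled `l`. -/
def leafDist {n : ℕ} {L : Type} [DecidableEq L] (ε : ℝ) :
    NoisyTree n L → (Fin n → Bool) → L → ℝ
  | .leaf l, _, l' => if l' = l then 1 else 0
  | .node i t0 t1, x, l' =>
      (if x i then ε else 1 - ε) * leafDist ε t0 x l' +
      (if x i then 1 - ε else ε) * leafDist ε t1 x l'

end NoisyTree

/-- A deterministic boolean decision tree on `n` variables with leaves labeled
by `L`: at a node labeled `i` the true value of `x i` is read and the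
computation branches on it. -/
inductive DetTree (n : ℕ) (L : Type) : Type where
  | leaf : L → DetTree n L
  | node : Fin n → DetTree n L → DetTree n L → DetTree n L

namespace DetTree

/-- The leaf label reached by the deterministic computation on input `x`. -/
def eval {n : ℕ} {L : Type} : DetTree n L → (Fin n → Bool) → L
  | .leaf l, _ => l
  | .node i t0 t1, x => if x i then eval t1 x else eval t0 x

/-- The set of distinct variables queried by the deterministic computation on
input `x`. -/
def queried {n : ℕ} {L : Type} : DetTree n L → (Fin n → Bool) → Finset (Fin n)
  | .leaf _, _ => ∅
  | .node i t0 t1, x => insert i (if x i then queried t1 x else queried t0 x)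

end DetTree

namespace DetTree

variable {n : ℕ} {L : Type}

theorem eval_node (i : Fin n) (D₀ D₁ : DetTree n L) (x : Fin n → Bool) :
    (node i D₀ D₁).eval x = (if x i then D₁ else D₀).eval x := by
  cases h : x i <;> simp [eval, h]

/-- The set of variables left unread by the deterministic computation on input `x`. -/
def unread (D : DetTree n L) (x : Fin n → Bool) : Finset (Fin n) :=
  (D.queried x)ᶜ

theorem card_unread (D : DetTree n L) (x : Fin n → Bool) :
    (D.unread x).card = n - (D.queried x).card := by
  rw [unread, Finset.card_compl, Fintype.card_fin]

theorem unread_leaf (l : L) (x : Fin n → Bool) : (leaf l).unread x = Finset.univ := by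
  simp [unread, queried]

theorem unread_node (i : Fin n) (D₀ D₁ : DetTree n L) (x : Fin n → Bool) :
    (node i D₀ D₁).unread x = ((if x i then D₁ else D₀).unread x).erase i := by
  cases h : x i <;> simp [unread, queried, h, Finset.compl_insert]

end DetTree

namespace NoisyTree

variable {n : ℕ} {L : Type}

theorem depth_child_lt (i : Fin n) (t₀ t₁ : NoisyTree n L) (b : Bool) :
    (if b then t₁ else t₀).depth < (node i t₀ t₁).depth := by
  cases b <;> simp [depth]

theorem pow_depth_node_mul_le {ε P Q : ℝ} (hε₀ : 0 ≤ ε) (hε₁ : ε ≤ 1) (hP : 0 ≤ P)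
    (hPQ : ε * P ≤ Q) (i : Fin n) (t₀ t₁ : NoisyTree n L) (b : Bool) :
    ε ^ (node i t₀ t₁).depth * P ≤ ε ^ (if b then t₁ else t₀).depth * Q :=
  calc ε ^ (node i t₀ t₁).depth * P ≤ ε ^ ((if b then t₁ else t₀).depth + 1) * P :=
        mul_le_mul_of_nonneg_right
          (pow_le_pow_of_le_one hε₀ hε₁ (depth_child_lt i t₀ t₁ b)) hP
    _ ≤ ε ^ (if b then t₁ else t₀).depth * Q := by
        rw [pow_succ, mul_assoc]
        gcongr

/-- The internal randomness of the simulation: one coin per internal node, where `none` means that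
the variable is read, and `some b` that it is not and the computation moves to child `b`. -/
def Seed : NoisyTree n L → Type
  | leaf _ => Unit
  | node _ t₀ t₁ => Option Bool × Seed t₀ × Seed t₁

instance instFintypeSeed : (T : NoisyTree n L) → Fintype T.Seed
  | leaf _ => inferInstanceAs (Fintype Unit)
  | node _ t₀ t₁ =>
    letI := instFintypeSeed t₀
    letI := instFintypeSeed t₁
    inferInstanceAs (Fintype (Option Bool × t₀.Seed × t₁.Seed))

/-- The deterministic tree that the simulation runs once its coins have been tossed. -/
def toDetTree : (T : NoisyTree n L) → T.Seed → DetTree n L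
  | leaf l, _ => .leaf l
  | node i t₀ t₁, (none, s₀, s₁) => .node i (t₀.toDetTree s₀) (t₁.toDetTree s₁)
  | node _ t₀ _, (some false, s₀, _) => t₀.toDetTree s₀
  | node _ _ t₁, (some true, _, s₁) => t₁.toDetTree s₁

/-- The probability of each outcome of the coin at an internal node. -/
def coinWeight (ε : ℝ) : Option Bool → ℝ
  | none => 1 - 2 * ε
  | some _ => ε

/-- The probability of a seed, the coins at the internal nodes being independent. -/
def seedWeight (ε : ℝ) : (T : NoisyTree n L) → T.Seed → ℝ
  | leaf _, _ => 1
  | node _ t₀ t₁, (c, s₀, s₁) => coinWeight ε c * (seedWeight ε t₀ s₀ * seedWeight ε t₁ s₁)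

/-- The expectation of `F D`, where `D` is the deterministic tree that the simulation runs. -/
noncomputable def expect (ε : ℝ) (T : NoisyTree n L) (F : DetTree n L → ℝ) : ℝ :=
  ∑ s, seedWeight ε T s * F (T.toDetTree s)

variable {ε : ℝ}

theorem coinWeight_nonneg (hε₀ : 0 ≤ ε) (hε₁ : ε ≤ 1 / 2) : ∀ c, 0 ≤ coinWeight ε c
  | none => by simp only [coinWeight]; linarith
  | some _ => hε₀

theorem seedWeight_nonneg (hε₀ : 0 ≤ ε) (hε₁ : ε ≤ 1 / 2) :
    ∀ (T : NoisyTree n L) (s : T.Seed), 0 ≤ seedWeight ε T s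
  | leaf _, _ => zero_le_one
  | node _ t₀ t₁, (c, s₀, s₁) =>
    mul_nonneg (coinWeight_nonneg hε₀ hε₁ c)
      (mul_nonneg (seedWeight_nonneg hε₀ hε₁ t₀ s₀) (seedWeight_nonneg hε₀ hε₁ t₁ s₁))

theorem sum_seed_node {M : Type*} [AddCommMonoid M] (i : Fin n) (t₀ t₁ : NoisyTree n L)
    (f : (node i t₀ t₁).Seed → M) :
    ∑ s, f s = ∑ s₀, ∑ s₁, f (none, s₀, s₁) +
      (∑ s₀, ∑ s₁, f (some true, s₀, s₁) + ∑ s₀, ∑ s₁, f (some false, s₀, s₁)) := by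
  have sum_prod (g : Option Bool × t₀.Seed × t₁.Seed → M) :
      ∑ s, g s = ∑ s₀, ∑ s₁, g (none, s₀, s₁) +
        (∑ s₀, ∑ s₁, g (some true, s₀, s₁) + ∑ s₀, ∑ s₁, g (some false, s₀, s₁)) := by
    simp only [Fintype.sum_prod_type, Fintype.sum_option, Fintype.sum_bool]
  exact sum_prod f

theorem sum_seedWeight (T : NoisyTree n L) : ∑ s, seedWeight ε T s = 1 := by
  induction T with
  | leaf => exact Fintype.sum_unique fun _ : Unit => 1
  | node i t₀ t₁ ih₀ ih₁ =>
    simp only [sum_seed_node, seedWeight, coinWeight, ← Finset.mul_sum, ih₀, ih₁, mul_one]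
    ring

theorem expect_leaf (l : L) (F : DetTree n L → ℝ) : expect ε (leaf l) F = F (.leaf l) :=
  (Fintype.sum_unique fun _ : Unit => 1 * F (.leaf l)).trans (one_mul _)

theorem expect_const (T : NoisyTree n L) (c : ℝ) : expect ε T (fun _ => c) = c := by
  rw [expect, ← Finset.sum_mul, sum_seedWeight, one_mul]

theorem expect_add (T : NoisyTree n L) (F G : DetTree n L → ℝ) :
    expect ε T (fun D => F D + G D) = expect ε T F + expect ε T G := by
  simp only [expect, mul_add, Finset.sum_add_distrib]

theorem expect_const_mul (T : NoisyTree n L) (c : ℝ) (F : DetTree n L → ℝ) :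
    expect ε T (fun D => c * F D) = c * expect ε T F := by
  simp only [expect, Finset.mul_sum, mul_left_comm]

theorem expect_mono (hε₀ : 0 ≤ ε) (hε₁ : ε ≤ 1 / 2) (T : NoisyTree n L) {F G : DetTree n L → ℝ}
    (h : ∀ D, F D ≤ G D) : expect ε T F ≤ expect ε T G :=
  Finset.sum_le_sum fun s _ => mul_le_mul_of_nonneg_left (h _) (seedWeight_nonneg hε₀ hε₁ T s)

theorem expect_node (i : Fin n) (t₀ t₁ : NoisyTree n L) (F : DetTree n L → ℝ) :
    expect ε (node i t₀ t₁) F =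
      (1 - 2 * ε) * expect ε t₀ (fun D₀ => expect ε t₁ fun D₁ => F (.node i D₀ D₁)) +
        ε * expect ε t₁ F + ε * expect ε t₀ F := by
  have h₁ : ∑ s₀, ∑ s₁, seedWeight ε t₀ s₀ * (seedWeight ε t₁ s₁ * F (t₁.toDetTree s₁)) =
      expect ε t₁ F := by
    rw [← Finset.sum_mul_sum, sum_seedWeight, one_mul, expect]
  have h₀ : ∑ s₀, ∑ s₁, seedWeight ε t₀ s₀ * (seedWeight ε t₁ s₁ * F (t₀.toDetTree s₀)) =
      expect ε t₀ F := by
    simp only [← Finset.mul_sum, ← Finset.sum_mul, sum_seedWeight, one_mul, expect]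
  rw [← h₁, ← h₀, expect, sum_seed_node]
  simp only [expect, seedWeight, coinWeight, toDetTree, Finset.mul_sum, mul_assoc, add_assoc]

theorem expect_node_of_eq_child {i : Fin n} {b : Bool} {F H : DetTree n L → ℝ}
    (hF : ∀ D₀ D₁, F (.node i D₀ D₁) = H (if b then D₁ else D₀)) (t₀ t₁ : NoisyTree n L) :
    expect ε (node i t₀ t₁) F =
      expect ε (if b then t₁ else t₀) (fun D => (1 - 2 * ε) * H D + ε * F D) +
        ε * expect ε (if !b then t₁ else t₀) F := by
  rw [expect_node, expect_add, expect_const_mul, expect_const_mul]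
  cases b
  · simp only [hF, expect_const, Bool.not_false, Bool.false_eq_true, if_true, if_false]
    ring
  · simp only [hF, expect_const, Bool.not_true, Bool.false_eq_true, if_true, if_false]

theorem expect_eval_eq [DecidableEq L] (T : NoisyTree n L) (x : Fin n → Bool) (l : L) :
    expect ε T (fun D => if D.eval x = l then 1 else 0) = T.leafDist ε x l := by
  induction T with
  | leaf l' =>
    rw [expect_leaf]
    exact if_congr eq_comm rfl rfl
  | node i t₀ t₁ ih₀ ih₁ =>
    rw [expect_node_of_eq_child (b := x i) (H := fun D => if D.eval x = l then 1 else 0)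
      (fun D₀ D₁ => by rw [DetTree.eval_node]), expect_add, expect_const_mul, expect_const_mul]
    cases h : x i <;> simp [leafDist, h, ih₀, ih₁] <;> ring

end NoisyTree

theorem prod_update_mul_const {ι R : Type*} [Fintype ι] [DecidableEq ι] [CommMonoid R]
    (p : ι → R) (i : ι) (c : R) :
    ∏ k, Function.update p i (p i * c) k = (∏ k, p k) * c := by
  rw [Finset.prod_update_of_mem (Finset.mem_univ i), mul_right_comm,
    Finset.sdiff_singleton_eq_erase, Finset.mul_prod_erase _ _ (Finset.mem_univ i)]

/-- The step to the child indexed by `x i`, of total probability `1 - ε`: given that it is taken,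
`i` is not read with probability `ε / (1 - ε)`, hence the factor by which `p i` shrinks. -/
theorem prod_one_sub_mul_erase_add {ι : Type*} [DecidableEq ι] {ε : ℝ} (hε : ε ≠ 1) (θ : ℝ)
    (p : ι → ℝ) (i : ι) (U : Finset ι) :
    (1 - 2 * ε) * ∏ k ∈ U.erase i, (1 - θ * p k) + ε * ∏ k ∈ U, (1 - θ * p k) =
      (1 - ε) * ∏ k ∈ U, (1 - θ * Function.update p i (p i * (ε / (1 - ε))) k) := by
  have hε' : 1 - ε ≠ 0 := sub_ne_zero.2 hε.symm
  have off_i : ∀ k ∈ U.erase i,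
      1 - θ * Function.update p i (p i * (ε / (1 - ε))) k = 1 - θ * p k := fun k hk => by
    rw [Function.update_of_ne (Finset.ne_of_mem_erase hk)]
  by_cases hi : i ∈ U
  · rw [← Finset.mul_prod_erase U _ hi, ← Finset.mul_prod_erase U _ hi,
      Finset.prod_congr rfl off_i, Function.update_self]
    field_simp
    ring
  · rw [Finset.erase_eq_of_notMem hi] at off_i ⊢
    rw [Finset.prod_congr rfl off_i]
    ring

theorem card_mul_geom_mean_le_sum {ι : Type*} [Fintype ι] [Nonempty ι] {p : ι → ℝ}
    (hp : ∀ k, 0 ≤ p k) :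
    Fintype.card ι * (∏ k, p k) ^ (1 / Fintype.card ι : ℝ) ≤ ∑ k, p k := by
  have amgm := Real.geom_mean_le_arith_mean Finset.univ (fun _ => 1) p (fun _ _ => zero_le_one)
    (by simp [Fintype.card_pos]) fun k _ => hp k
  simp only [Real.rpow_one, Finset.sum_const, Finset.card_univ, nsmul_eq_mul, mul_one, one_mul]
    at amgm
  rwa [le_div_iff₀' (by exact_mod_cast Fintype.card_pos), ← one_div] at amgm

theorem prod_one_sub_mul_le_exp {ι : Type*} [Fintype ι] [Nonempty ι] {θ : ℝ} (hθ : θ ∈ Set.Icc 0 1)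
    {p : ι → ℝ} (hp : ∀ k, p k ∈ Set.Icc 0 1) :
    ∏ k, (1 - θ * p k) ≤
      Real.exp (-(θ * (Fintype.card ι * (∏ k, p k) ^ (1 / Fintype.card ι : ℝ)))) :=
  calc ∏ k, (1 - θ * p k) ≤ ∏ k, Real.exp (-(θ * p k)) :=
        Finset.prod_le_prod
          (fun k _ => sub_nonneg.2 (mul_le_one₀ hθ.2 (hp k).1 (hp k).2))
          (fun k _ => Real.one_sub_le_exp_neg _)
    _ = Real.exp (-(θ * ∑ k, p k)) := by
        rw [← Real.exp_sum, Finset.sum_neg_distrib, Finset.mul_sum]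
    _ ≤ _ := by
        gcongr
        · exact hθ.1
        · exact card_mul_geom_mean_le_sum fun k => (hp k).1

namespace NoisyTree

variable {n : ℕ} {L : Type} {ε θ : ℝ}

theorem expect_prod_unread_le (hε₀ : 0 ≤ ε) (hε₁ : ε ≤ 1 / 2) {Φ : ℝ → ℝ}
    (hΦ : AntitoneOn Φ (Set.Ici 0))
    (hprod : ∀ p : Fin n → ℝ, (∀ k, p k ∈ Set.Icc 0 1) → ∏ k, (1 - θ * p k) ≤ Φ (∏ k, p k))
    (x : Fin n → Bool) (T : NoisyTree n L) (p : Fin n → ℝ) (hp : ∀ k, p k ∈ Set.Icc 0 1) :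
    expect ε T (fun D => ∏ k ∈ D.unread x, (1 - θ * p k)) ≤ Φ (ε ^ T.depth * ∏ k, p k) := by
  induction T generalizing p with
  | leaf l => simpa [expect_leaf, DetTree.unread_leaf, depth] using hprod p hp
  | node i t₀ t₁ ih₀ ih₁ =>
    have hq₀ : ε ≤ ε / (1 - ε) := le_div_self hε₀ (by linarith) (by linarith)
    have hq₁ : ε / (1 - ε) ≤ 1 := (div_le_one (by linarith)).2 (by linarith)
    set p' := Function.update p i (p i * (ε / (1 - ε))) with p'_def
    have hp' : ∀ k, p' k ∈ Set.Icc 0 1 := by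
      refine (Function.forall_update_iff p fun _ y => y ∈ Set.Icc 0 1).2 ⟨?_, fun k _ => hp k⟩
      exact ⟨mul_nonneg (hp i).1 (hε₀.trans hq₀), mul_le_one₀ (hp i).2 (hε₀.trans hq₀) hq₁⟩
    have prod_nonneg : 0 ≤ ∏ k, p k := Finset.prod_nonneg fun k _ => (hp k).1
    have prod_p' : ε * ∏ k, p k ≤ ∏ k, p' k := by
      rw [prod_update_mul_const, mul_comm]
      gcongr
    set B := Φ (ε ^ (node i t₀ t₁).depth * ∏ k, p k)
    have child_le (b : Bool) (q : Fin n → ℝ) (hq : ∀ k, q k ∈ Set.Icc 0 1)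
        (hpq : ε * ∏ k, p k ≤ ∏ k, q k) :
        expect ε (if b then t₁ else t₀) (fun D => ∏ k ∈ D.unread x, (1 - θ * q k)) ≤ B := by
      have ih : expect ε (if b then t₁ else t₀) (fun D => ∏ k ∈ D.unread x, (1 - θ * q k)) ≤
          Φ (ε ^ (if b then t₁ else t₀).depth * ∏ k, q k) := by
        cases b
        exacts [ih₀ q hq, ih₁ q hq]
      have le_child := pow_depth_node_mul_le hε₀ (by linarith) prod_nonneg hpq i t₀ t₁ b
      have nonneg : 0 ≤ ε ^ (node i t₀ t₁).depth * ∏ k, p k := by positivity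
      exact ih.trans (hΦ nonneg (nonneg.trans le_child) le_child)
    rw [expect_node_of_eq_child (b := x i)
      (H := fun D => ∏ k ∈ (D.unread x).erase i, (1 - θ * p k))
      (fun D₀ D₁ => by rw [DetTree.unread_node])]
    simp only [prod_one_sub_mul_erase_add (by linarith : ε ≠ 1), ← p'_def, expect_const_mul]
    calc _ ≤ (1 - ε) * B + ε * B := by
          gcongr
          · linarith
          · exact child_le (x i) p' hp' prod_p'
          · exact child_le (!x i) p hp (mul_le_of_le_one_left prod_nonneg (by linarith))
      _ = B := by ring

theorem expect_pow_card_unread_le [NeZero n] (hε₀ : 0 ≤ ε) (hε₁ : ε ≤ 1 / 2)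
    (hθ : θ ∈ Set.Icc 0 1) (T : NoisyTree n L) (x : Fin n → Bool) :
    expect ε T (fun D => (1 - θ) ^ (D.unread x).card) ≤
      Real.exp (-(θ * (n * ε ^ (T.depth / n : ℝ)))) := by
  have hΦ : AntitoneOn (fun P : ℝ => Real.exp (-(θ * (n * P ^ (1 / n : ℝ))))) (Set.Ici 0) := by
    intro P hP Q _ hPQ
    have := hθ.1
    have := Set.mem_Ici.1 hP
    dsimp only
    gcongr
  have h := expect_prod_unread_le hε₀ hε₁ hΦ
    (fun p hp => by simpa using prod_one_sub_mul_le_exp hθ hp) x T (fun _ => 1) (by simp)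
  have hpow : (ε ^ T.depth) ^ (1 / n : ℝ) = ε ^ (T.depth / n : ℝ) := by
    rw [← Real.rpow_natCast_mul hε₀, mul_one_div]
  simpa [← hpow] using h

theorem one_sub_exp_div_pow_le_expect_card_unread [NeZero n] (hε₀ : 0 ≤ ε) (hε₁ : ε ≤ 1 / 2)
    (hθ₀ : 0 ≤ θ) (hθ₁ : θ < 1) (T : NoisyTree n L) (x : Fin n → Bool) (r : ℕ) :
    1 - Real.exp (-(θ * (n * ε ^ (T.depth / n : ℝ)))) / (1 - θ) ^ r ≤
      expect ε T (fun D => if r ≤ (D.unread x).card then 1 else 0) := by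
  have hθ : 0 < 1 - θ := sub_pos.2 hθ₁
  have markov (D : DetTree n L) : 1 ≤ (if r ≤ (D.unread x).card then (1 : ℝ) else 0) +
      ((1 - θ) ^ r)⁻¹ * (1 - θ) ^ (D.unread x).card := by
    split_ifs with h
    · exact le_add_of_nonneg_right (by positivity)
    · rw [zero_add, inv_mul_eq_div, one_le_div (by positivity)]
      exact pow_le_pow_of_le_one hθ.le (by linarith) (not_le.1 h).le
  have h := expect_mono hε₀ hε₁ T markov
  rw [expect_const, expect_add, expect_const_mul] at h
  rw [sub_le_iff_le_add, div_eq_inv_mul]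
  refine h.trans ?_
  gcongr
  exact expect_pow_card_unread_le hε₀ hε₁ ⟨hθ₀, hθ₁.le⟩ T x

theorem exists_fin_expect_eq (hε₀ : 0 ≤ ε) (hε₁ : ε ≤ 1 / 2) (T : NoisyTree n L) :
    ∃ (m : ℕ) (trees : Fin m → DetTree n L) (w : Fin m → ℝ),
      (∀ j, 0 ≤ w j) ∧ ∀ F, ∑ j, w j * F (trees j) = expect ε T F := by
  let e := Fintype.equivFin T.Seed
  exact ⟨_, T.toDetTree ∘ e.symm, seedWeight ε T ∘ e.symm,
    fun j => seedWeight_nonneg hε₀ hε₁ T _,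
    fun F => e.symm.sum_comp fun s => seedWeight ε T s * F (T.toDetTree s)⟩

end NoisyTree

theorem le_mul_rpow_of_le_mul_logb {ε a b d : ℝ} (hε₀ : 0 < ε) (hε₁ : ε < 1) (ha : 0 < a)
    (hb : 0 < b) (hd : d ≤ b * Real.logb (1 / ε) (b / a)) :
    a ≤ b * ε ^ (d / b) := by
  have h : (1 / ε) ^ (d / b) ≤ b / a :=
    (Real.le_logb_iff_rpow_le (one_lt_one_div hε₀ hε₁) (by positivity)).1 <|
      (div_le_iff₀' hb).2 hd
  rw [one_div, Real.inv_rpow hε₀.le, inv_le_comm₀ (by positivity) (by positivity), inv_div] at h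
  exact (div_le_iff₀' hb).1 h

theorem half_mul_logb_two_div_le {a b y : ℝ} (ha : 0 ≤ a) (hb : 1 < b) (hy : 1 ≤ y) :
    a / 2 * Real.logb 2 y / Real.logb 2 b ≤ a * Real.logb b y := by
  rw [mul_div_assoc, Real.logb, Real.logb,
    div_div_div_cancel_right₀ (Real.log_pos one_lt_two).ne', Real.log_div_log]
  exact mul_le_mul_of_nonneg_right (half_le_self ha) (Real.logb_nonneg hb hy)

theorem exp_neg_four_le_one_eighth : Real.exp (-4) ≤ 1 / 8 := by
  have two_le_exp_one : (2 : ℝ) ≤ Real.exp 1 := by linarith [Real.add_one_le_exp 1]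
  have exp_four : Real.exp 4 = Real.exp 1 ^ 4 := by rw [← Real.exp_nat_mul]; norm_num
  rw [Real.exp_neg, inv_le_comm₀ (Real.exp_pos 4) (by norm_num), exp_four]
  calc (1 / 8 : ℝ)⁻¹ ≤ 2 ^ 4 := by norm_num
    _ ≤ Real.exp 1 ^ 4 := by gcongr

theorem noisy_tree_to_sampling_r_unread_general {n r : ℕ} {L : Type} [DecidableEq L]
    {ε c : ℝ} (hε₀ : 0 < ε) (hε₁ : ε ≤ 1 / 2) (hr : 0 < r) (hn : 0 < n) (hc : 0 < c)
    (T : NoisyTree n L) (hdepth : (T.depth : ℝ) ≤ n * Real.logb (1 / ε) (n / (c * r))) :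
    ∃ (m : ℕ) (trees : Fin m → DetTree n L) (w : Fin m → ℝ),
      (∀ j, 0 ≤ w j) ∧ (∑ j, w j = 1) ∧
      (∀ (x : Fin n → Bool) (l : L),
        ∑ j, w j * (if (trees j).eval x = l then (1 : ℝ) else 0) = T.leafDist ε x l) ∧
      ∀ x : Fin n → Bool,
        1 - Real.exp (-((c / 2 - Real.log 2) * r)) ≤
          ∑ j ∈ Finset.univ.filter (fun j => r ≤ n - ((trees j).queried x).card), w j := by
  have : NeZero n := ⟨hn.ne'⟩
  obtain ⟨m, trees, w, hw, hexpect⟩ := T.exists_fin_expect_eq hε₀.le hε₁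
  refine ⟨m, trees, w, hw, ?_, fun x l => ?_, fun x => ?_⟩
  · simpa [NoisyTree.expect_const] using hexpect fun _ => 1
  · rw [← NoisyTree.expect_eval_eq, ← hexpect]
  · have hunread := T.one_sub_exp_div_pow_le_expect_card_unread (θ := 1 / 2) hε₀.le hε₁
      (by norm_num) (by norm_num) x r
    have hmean : c * r ≤ n * ε ^ (T.depth / n : ℝ) :=
      le_mul_rpow_of_le_mul_logb hε₀ (by linarith) (by positivity) (by positivity) hdepth
    simp only [← hexpect, DetTree.card_unread, mul_ite, mul_one, mul_zero, ← Finset.sum_filter]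
      at hunread
    refine le_trans (sub_le_sub_left ?_ 1) hunread
    have hhalf : (1 - 1 / 2 : ℝ) ^ r = Real.exp (-(r * Real.log 2)) := by
      rw [Real.exp_neg, Real.exp_nat_mul, Real.exp_log two_pos, ← inv_pow]
      norm_num
    rw [hhalf, ← Real.exp_sub]
    exact Real.exp_le_exp.2 (by linarith)

/-- Simulation of an `ε`-noisy decision tree of depth at most
`(n/2) · log₂(n/(64r)) / log₂(1/ε)` (where `1 ≤ r` and `n ≥ 64r`) by a randomized
query algorithm (a finitely supported distribution `(w, trees)` over deterministic
decision trees whose leaves are labeled by leaves of `T`): the leaf distribution of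
the `ε`-noisy computation of `T` is reproduced on every input, and on every input,
with probability at least `1 - e^(-4) ≥ 7/8`, at least `r` variables are left
unread. -/
theorem noisy_tree_to_sampling_r_unread {n r : ℕ} {L : Type} [DecidableEq L]
    (ε : ℝ) (hε0 : 0 < ε) (hε1 : ε < 1 / 2) (hr : 1 ≤ r) (hn : 64 * r ≤ n)
    (T : NoisyTree n L)
    (hdepth : (T.depth : ℝ) ≤
      ((n : ℝ) / 2) * Real.logb 2 ((n : ℝ) / (64 * r)) / Real.logb 2 (1 / ε)) :
    ∃ (m : ℕ) (trees : Fin m → DetTree n L) (w : Fin m → ℝ),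
      (∀ j, 0 ≤ w j) ∧ (∑ j, w j = 1) ∧
      (∀ (x : Fin n → Bool) (l : L),
        ∑ j, w j * (if (trees j).eval x = l then (1 : ℝ) else 0) = T.leafDist ε x l) ∧
      (∀ x : Fin n → Bool,
        1 - Real.exp (-4) ≤
          ∑ j ∈ Finset.univ.filter
              (fun j => r ≤ n - ((trees j).queried x).card), w j) ∧
      (7 / 8 : ℝ) ≤ 1 - Real.exp (-4) := by
  have hr' : (1 : ℝ) ≤ r := by exact_mod_cast hr
  have hratio : (1 : ℝ) ≤ n / (64 * r) := (one_le_div (by positivity)).2 (by exact_mod_cast hn)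
  have hdepth' : (T.depth : ℝ) ≤ n * Real.logb (1 / ε) (n / (64 * r)) :=
    hdepth.trans <| half_mul_logb_two_div_le n.cast_nonneg (one_lt_one_div hε0 (by linarith)) hratio
  obtain ⟨m, trees, w, hw, hsum, hleaf, hunread⟩ :=
    noisy_tree_to_sampling_r_unread_general hε0 hε1.le hr (by omega) (by norm_num) T hdepth'
  have hexp : Real.exp (-((64 / 2 - Real.log 2) * r)) ≤ Real.exp (-4) :=
    Real.exp_le_exp.2 (by nlinarith [Real.log_two_lt_d9])
  exact ⟨m, trees, w, hw, hsum, hleaf, fun x => (sub_le_sub_left hexp 1).trans (hunread x),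
    by linarith [exp_neg_four_le_one_eighth]⟩
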